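/- Let H and K be complex Hilbert spaces, let T ∈ B(H,K), and let α ∈ (0,1). Then there exists U ∈ B(H,K) such that: (i) T = U ∘ |T|^α and T* = U* ∘ |T*|^α; (ii) U*U = |T|^{2(1−α)} and UU* = |T*|^{2(1−α)}; (iii) U ∘ |T|^β = |T*|^β ∘ U for every real β > 0. -/

import Mathlib

/-- `|T|^α = (T*T)^{α/2}` defined via the continuous functional calculus. -/
noncomputable def absPow {H K : Type*} [NormedAddCommGroup H] [InnerProductSpace ℂ H]
    [NormedAddCommGroup K] [InnerProductSpace ℂ K] [CompleteSpace H] [CompleteSpace K]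
    (T : H →L[ℂ] K) (α : ℝ) : H →L[ℂ] H :=
  CFC.rpow ((ContinuousLinearMap.adjoint T).comp T) (α / 2)

/-!
Since `‖T x‖ = ‖|T| x‖ ≤ ‖|T|^(1-α)‖ ‖|T|^α x‖`, the assignment `|T|^α x ↦ T x` extends to a bounded
operator `U` that vanishes on `ker T = (range |T|^α)ᗮ`. Two operators that vanish on `ker T` are
equal as soon as they agree on the range of `|T|^α`, and on that range the identities for `U` reduce
to the intertwining relation `T |T|^β = |T*|^β T`. The latter follows from `T (T*T) = (TT*) T` by
approximating the power function by polynomials.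
-/

open ContinuousLinearMap
open scoped InnerProduct NNReal

section OrthogonalRange

variable {𝕜 E F G : Type*} [RCLike 𝕜] [AddCommGroup E] [Module 𝕜 E]
  [NormedAddCommGroup F] [InnerProductSpace 𝕜 F] [CompleteSpace F]

theorem exists_comp_eq_of_norm_le_mul_norm
    [NormedAddCommGroup G] [NormedSpace 𝕜 G] [CompleteSpace G]
    {f : E →ₗ[𝕜] G} {g : E →ₗ[𝕜] F} {C : ℝ} (h : ∀ x, ‖f x‖ ≤ C * ‖g x‖) :
    ∃ U : F →L[𝕜] G, U ∘ₗ g = f ∧ g.rangeᗮ ≤ U.ker := by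
  set S := g.range.topologicalClosure
  let e : E →ₗ[𝕜] S := g.codRestrict S fun x => g.range.le_topologicalClosure ⟨x, rfl⟩
  have he : DenseRange e :=
    ((denseRange_inclusion_iff subset_closure).2 subset_rfl).comp
      g.surjective_rangeRestrict.denseRange (continuous_inclusion subset_closure)
  refine ⟨f.extendOfNorm e ∘L S.orthogonalProjectionOnto, LinearMap.ext fun x => ?_, fun y hy => ?_⟩
  · have hx : S.orthogonalProjectionOnto (g x) = e x :=
      S.orthogonalProjectionOnto_mem_subspace_eq_self (e x)
    simpa [hx] using LinearMap.extendOfNorm_eq he ⟨C, h⟩ x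
  · have hy₀ : S.orthogonalProjectionOnto y = 0 := by
      rwa [S.orthogonalProjectionOnto_eq_zero_iff, g.range.orthogonal_closure]
    simp [hy₀]

theorem eq_of_comp_eq_of_orthogonal_range_le_ker
    [AddCommGroup G] [TopologicalSpace G] [T2Space G] [Module 𝕜 G]
    {g : E →ₗ[𝕜] F} {S S' : F →L[𝕜] G} (h : S ∘ₗ g = (S' ∘ₗ g : E →ₗ[𝕜] G))
    (hS : g.rangeᗮ ≤ S.ker) (hS' : g.rangeᗮ ≤ S'.ker) : S = S' := by
  set L := LinearMap.eqLocus S.toLinearMap S'.toLinearMap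
  set R := g.range.topologicalClosure
  have h_closure : R ≤ L :=
    Submodule.topologicalClosure_minimal _ (by rintro _ ⟨x, rfl⟩; exact LinearMap.congr_fun h x)
      (isClosed_eq S.continuous S'.continuous)
  have h_orthogonal : Rᗮ ≤ L := by
    rw [Submodule.orthogonal_closure]
    exact fun y hy => (hS hy).trans (hS' hy).symm
  have h_top : ⊤ ≤ L := by
    rw [← R.sup_orthogonal_of_hasOrthogonalProjection]
    exact sup_le h_closure h_orthogonal
  exact ContinuousLinearMap.ext fun x => h_top (Submodule.mem_top (x := x))

end OrthogonalRange

theorem comp_algHom_eq_algHom_comp {E F : Type*} [NormedAddCommGroup E] [NormedSpace ℂ E]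
    [NormedAddCommGroup F] [NormedSpace ℂ F] {T : E →L[ℂ] F} {s : Set ℝ} [CompactSpace s]
    {φ : C(s, ℝ) →ₐ[ℝ] (E →L[ℂ] E)} {ψ : C(s, ℝ) →ₐ[ℝ] (F →L[ℂ] F)}
    (hφ : Continuous φ) (hψ : Continuous ψ)
    (h : T ∘L φ (.restrict s (.id ℝ)) = ψ (.restrict s (.id ℝ)) ∘L T) (f : C(s, ℝ)) :
    T ∘L φ f = ψ f ∘L T := by
  induction f using ContinuousMap.induction_on_of_compact with
  | const r =>
    change T ∘L φ (algebraMap ℝ C(s, ℝ) r) = ψ (algebraMap ℝ C(s, ℝ) r) ∘L T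
    ext x
    simp [Algebra.algebraMap_eq_smul_one]
  | id => exact h
  | star_id => simpa only [star_trivial] using h
  | add f g hf hg => simp only [map_add, comp_add, add_comp, hf, hg]
  | mul f g hf hg =>
    simp only [map_mul, mul_def]
    rw [← comp_assoc, hf, comp_assoc, hg, comp_assoc]
  | frequently f hf =>
    have h_closed : IsClosed {g : C(s, ℝ) | T ∘L φ g = ψ g ∘L T} :=
      isClosed_eq (by fun_prop) (by fun_prop)
    exact h_closed.closure_subset (mem_closure_iff_frequently.2 hf)

theorem rpow_mul_rpow_of_nonneg {A : Type*} [CStarAlgebra A] [PartialOrder A] [StarOrderedRing A]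
    (a : A) {r s : ℝ} (hr : 0 ≤ r) (hs : 0 ≤ s) : a ^ r * a ^ s = a ^ (r + s) := by
  simp only [CFC.rpow_def]
  rw [← cfc_mul (R := ℝ≥0) (· ^ r) (· ^ s) a (NNReal.continuous_rpow_const hr).continuousOn
    (NNReal.continuous_rpow_const hs).continuousOn]
  exact cfc_congr fun x _ => (NNReal.rpow_add_of_nonneg x hr hs).symm

section Operators

variable {H K : Type*} [NormedAddCommGroup H] [InnerProductSpace ℂ H] [CompleteSpace H]
  [NormedAddCommGroup K] [InnerProductSpace ℂ K] [CompleteSpace K]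

section Intertwining

variable {T : H →L[ℂ] K} {A : H →L[ℂ] H} {B : K →L[ℂ] K}

theorem comp_cfc_eq_cfc_comp (hA : IsSelfAdjoint A) (hB : IsSelfAdjoint B)
    (h : T ∘L A = B ∘L T) {f : ℝ → ℝ} (hf : ContinuousOn f (spectrum ℝ A ∪ spectrum ℝ B)) :
    T ∘L cfc f A = cfc f B ∘L T := by
  set s := spectrum ℝ A ∪ spectrum ℝ B
  have : CompactSpace s := isCompact_iff_compactSpace.1 <|
    (ContinuousFunctionalCalculus.isCompact_spectrum A).union
      (ContinuousFunctionalCalculus.isCompact_spectrum B)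
  let ιA : C(spectrum ℝ A, s) := .inclusion Set.subset_union_left
  let ιB : C(spectrum ℝ B, s) := .inclusion Set.subset_union_right
  let φ : C(s, ℝ) →⋆ₐ[ℝ] (H →L[ℂ] H) := (cfcHom hA).comp (ιA.compStarAlgHom' ℝ ℝ)
  let ψ : C(s, ℝ) →⋆ₐ[ℝ] (K →L[ℂ] K) := (cfcHom hB).comp (ιB.compStarAlgHom' ℝ ℝ)
  have hφ : Continuous φ := (cfcHom_continuous hA).comp ιA.continuous_precomp
  have hψ : Continuous ψ := (cfcHom_continuous hB).comp ιB.continuous_precomp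
  have hφ_id : φ (.restrict s (.id ℝ)) = A := cfcHom_id hA
  have hψ_id : ψ (.restrict s (.id ℝ)) = B := cfcHom_id hB
  rw [cfc_apply f A hA (hf.mono Set.subset_union_left),
    cfc_apply f B hB (hf.mono Set.subset_union_right)]
  exact comp_algHom_eq_algHom_comp (φ := φ.toAlgHom) (ψ := ψ.toAlgHom) hφ hψ
    (hφ_id.symm ▸ hψ_id.symm ▸ h) ⟨_, hf.domRestrict⟩

theorem comp_rpow_eq_rpow_comp (hA : 0 ≤ A) (hB : 0 ≤ B) (h : T ∘L A = B ∘L T)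
    {r : ℝ} (hr : 0 ≤ r) : T ∘L (A ^ r) = (B ^ r) ∘L T := by
  rw [CFC.rpow_eq_cfc_real hA, CFC.rpow_eq_cfc_real hB]
  exact comp_cfc_eq_cfc_comp (.of_nonneg hA) (.of_nonneg hB) h
    (Real.continuous_rpow_const hr).continuousOn

-- A vector `x` in the kernel, viewed as a map `ℂ → H`, intertwines `0` with `A`.
theorem ker_le_ker_rpow (hA : 0 ≤ A) {r : ℝ} (hr : 0 < r) : A.ker ≤ (A ^ r : H →L[ℂ] H).ker := by
  intro x (hx : A x = 0)
  have h_zero : (0 : ℂ →L[ℂ] ℂ) ^ r = 0 := CFC.zero_rpow hr.ne'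
  have h : toSpanSingleton ℂ x ∘L ((0 : ℂ →L[ℂ] ℂ) ^ r) = (A ^ r) ∘L toSpanSingleton ℂ x :=
    comp_rpow_eq_rpow_comp le_rfl hA (by ext; simp [hx]) hr.le
  simpa [h_zero, eq_comm] using congr($h 1)

theorem ker_rpow (hA : 0 ≤ A) {r : ℝ} (hr : 0 < r) : (A ^ r : H →L[ℂ] H).ker = A.ker := by
  have h : (A ^ r) ^ r⁻¹ = A := by
    rw [CFC.rpow_rpow_of_exponent_nonneg A _ _ hr.le (inv_nonneg.2 hr.le), mul_inv_cancel₀ hr.ne',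
      CFC.rpow_one A]
  refine le_antisymm ?_ (ker_le_ker_rpow hA hr)
  simpa [h] using ker_le_ker_rpow (A := A ^ r) CFC.rpow_nonneg (inv_pos.2 hr)

end Intertwining

section AbsPow

variable (T : H →L[ℂ] K) {r s : ℝ}

theorem adjoint_comp_self_nonneg : 0 ≤ T† ∘L T :=
  (nonneg_iff_isPositive _).2 (isPositive_adjoint_comp_self T)

theorem adjoint_absPow (r : ℝ) : (absPow T r)† = absPow T r :=
  (IsSelfAdjoint.of_nonneg CFC.rpow_nonneg).adjoint_eq

theorem absPow_two : absPow T 2 = T† ∘L T := by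
  simpa [absPow] using CFC.rpow_one _ (adjoint_comp_self_nonneg T)

theorem absPow_comp_absPow (hr : 0 ≤ r) (hs : 0 ≤ s) :
    absPow T r ∘L absPow T s = absPow T (r + s) := by
  rw [absPow, absPow, absPow, add_div]
  exact rpow_mul_rpow_of_nonneg _ (by positivity) (by positivity)

theorem comp_absPow_eq_absPow_adjoint_comp (hr : 0 ≤ r) :
    T ∘L absPow T r = absPow (T†) r ∘L T :=
  comp_rpow_eq_rpow_comp (adjoint_comp_self_nonneg T) (adjoint_comp_self_nonneg (T†))
    (by rw [adjoint_adjoint, comp_assoc]) (by positivity)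

theorem norm_absPow_one_apply (x : H) : ‖absPow T 1 x‖ = ‖T x‖ := by
  have h : (absPow T 1)† ∘L absPow T 1 = T† ∘L T := by
    rw [adjoint_absPow, absPow_comp_absPow T zero_le_one zero_le_one, one_add_one_eq_two,
      absPow_two]
  rw [← sq_eq_sq₀ (norm_nonneg _) (norm_nonneg _), apply_norm_sq_eq_inner_adjoint_left,
    apply_norm_sq_eq_inner_adjoint_left, h]

theorem ker_absPow (hr : 0 < r) : (absPow T r).ker = T.ker :=
  (ker_rpow (adjoint_comp_self_nonneg T) (half_pos hr)).trans (ker_adjoint_comp_self T)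

theorem orthogonal_range_absPow (hr : 0 < r) : (absPow T r).rangeᗮ = T.ker := by
  rw [orthogonal_range, adjoint_absPow, ker_absPow T hr]

theorem eq_of_comp_absPow_eq {G : Type*} [AddCommGroup G] [TopologicalSpace G] [T2Space G]
    [Module ℂ G] {S S' : H →L[ℂ] G} (hr : 0 < r) (h : S ∘L absPow T r = S' ∘L absPow T r)
    (hS : T.ker ≤ S.ker) (hS' : T.ker ≤ S'.ker) : S = S' := by
  rw [← orthogonal_range_absPow T hr] at hS hS'
  exact eq_of_comp_eq_of_orthogonal_range_le_ker congr(($h).toLinearMap) hS hS'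

end AbsPow

/-- `U` is the factor of exponent `α` in the generalized polar decomposition `T = U |T|^α`. The
product determines `U` only on the closure of the range of `|T|^α`, so `U` is also required to
vanish on `ker T`, which for `α > 0` is the orthogonal complement of that range. -/
structure IsPolarFactor (T : H →L[ℂ] K) (α : ℝ) (U : H →L[ℂ] K) : Prop where
  comp_absPow_self : U ∘L absPow T α = T
  ker_le : T.ker ≤ U.ker

theorem exists_isPolarFactor (T : H →L[ℂ] K) {α : ℝ} (hα₀ : 0 < α) (hα₁ : α ≤ 1) :
    ∃ U, IsPolarFactor T α U := by
  have h_factor : absPow T 1 = absPow T (1 - α) ∘L absPow T α := by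
    rw [absPow_comp_absPow T (sub_nonneg.2 hα₁) hα₀.le, sub_add_cancel]
  have h_bound (x : H) : ‖T x‖ ≤ ‖absPow T (1 - α)‖ * ‖absPow T α x‖ := by
    rw [← norm_absPow_one_apply, h_factor]
    exact (absPow T (1 - α)).le_opNorm _
  obtain ⟨U, hU, hU_ker⟩ := exists_comp_eq_of_norm_le_mul_norm (f := T.toLinearMap)
    (g := (absPow T α).toLinearMap) h_bound
  exact ⟨U, coe_injective hU, (orthogonal_range_absPow T hα₀).symm.trans_le hU_ker⟩

namespace IsPolarFactor

variable {T U : H →L[ℂ] K} {α : ℝ} (hU : IsPolarFactor T α U)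
include hU

theorem ker_le_ker_comp {G : Type*} [NormedAddCommGroup G] [NormedSpace ℂ G] (S : K →L[ℂ] G) :
    T.ker ≤ (S ∘L U).ker :=
  hU.ker_le.trans (LinearMap.ker_le_ker_comp U.toLinearMap S.toLinearMap)

theorem comp_absPow {β : ℝ} (hα : 0 < α) (hβ : 0 < β) :
    U ∘L absPow T β = absPow (T†) β ∘L U := by
  refine eq_of_comp_absPow_eq T hα ?_ ?_ (hU.ker_le_ker_comp _)
  · calc (U ∘L absPow T β) ∘L absPow T α
      _ = (U ∘L absPow T α) ∘L absPow T β := by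
        rw [comp_assoc, absPow_comp_absPow T hβ.le hα.le, add_comm,
          ← absPow_comp_absPow T hα.le hβ.le, comp_assoc]
      _ = absPow (T†) β ∘L T := by
        rw [hU.comp_absPow_self, comp_absPow_eq_absPow_adjoint_comp T hβ.le]
      _ = (absPow (T†) β ∘L U) ∘L absPow T α := by rw [comp_assoc, hU.comp_absPow_self]
  · exact (ker_absPow T hβ).ge.trans
      (LinearMap.ker_le_ker_comp (absPow T β).toLinearMap U.toLinearMap)

theorem adjoint_comp_absPow (hα : 0 < α) : U† ∘L absPow (T†) α = T† := by
  rw [← adjoint_absPow, ← adjoint_comp, ← hU.comp_absPow hα hα, hU.comp_absPow_self]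

theorem adjoint_comp_eq_absPow (hα₀ : 0 < α) (hα₂ : α < 2) : T† ∘L U = absPow T (2 - α) := by
  have hα : 0 < 2 - α := sub_pos.2 hα₂
  refine eq_of_comp_absPow_eq T hα₀ ?_ (hU.ker_le_ker_comp _) (ker_absPow T hα).ge
  rw [comp_assoc, hU.comp_absPow_self, absPow_comp_absPow T hα.le hα₀.le, sub_add_cancel,
    absPow_two]

theorem adjoint_comp_self (hα₀ : 0 < α) (hα₁ : α < 1) : U† ∘L U = absPow T (2 * (1 - α)) := by
  have hα : 0 < 2 * (1 - α) := by linarith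
  refine eq_of_comp_absPow_eq T hα₀ ?_ (hU.ker_le_ker_comp _) (ker_absPow T hα).ge
  calc (U† ∘L U) ∘L absPow T α
    _ = (T† ∘L U)† := by
      rw [comp_assoc, hU.comp_absPow_self, adjoint_comp, adjoint_adjoint]
    _ = absPow T (2 - α) := by
      rw [hU.adjoint_comp_eq_absPow hα₀ (by linarith), adjoint_absPow]
    _ = absPow T (2 * (1 - α)) ∘L absPow T α := by
      rw [absPow_comp_absPow T hα.le hα₀.le]
      congr 1
      ring

theorem orthogonal_range_le_ker_adjoint : U.rangeᗮ ≤ (T†).ker := by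
  rw [orthogonal_range, ← hU.comp_absPow_self, adjoint_comp]
  exact LinearMap.ker_le_ker_comp (U†).toLinearMap _

theorem comp_adjoint_self (hα₀ : 0 < α) (hα₁ : α < 1) :
    U ∘L U† = absPow (T†) (2 * (1 - α)) := by
  have hα : 0 < 2 * (1 - α) := by linarith
  have h_comp : (U ∘L U†) ∘L U = absPow (T†) (2 * (1 - α)) ∘L U := by
    rw [comp_assoc, hU.adjoint_comp_self hα₀ hα₁, hU.comp_absPow hα₀ hα]
  refine eq_of_comp_eq_of_orthogonal_range_le_ker congr(($h_comp).toLinearMap) ?_ ?_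
  · exact U.orthogonal_range.trans_le (LinearMap.ker_le_ker_comp (U†).toLinearMap U.toLinearMap)
  · exact hU.orthogonal_range_le_ker_adjoint.trans (ker_absPow (T†) hα).ge

end IsPolarFactor

end Operators

/-- The generalized polar decomposition (Hilbert-space case of Theorem 3.1). -/
theorem generalized_polar_decomposition
    {H K : Type*} [NormedAddCommGroup H] [InnerProductSpace ℂ H] [CompleteSpace H]
    [NormedAddCommGroup K] [InnerProductSpace ℂ K] [CompleteSpace K]
    (T : H →L[ℂ] K) (α : ℝ) (hα : α ∈ Set.Ioo (0 : ℝ) 1) :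
    ∃ U : H →L[ℂ] K,
      T = U.comp (absPow T α) ∧
      ContinuousLinearMap.adjoint T =
        (ContinuousLinearMap.adjoint U).comp (absPow (ContinuousLinearMap.adjoint T) α) ∧
      (ContinuousLinearMap.adjoint U).comp U = absPow T (2 * (1 - α)) ∧
      U.comp (ContinuousLinearMap.adjoint U) =
        absPow (ContinuousLinearMap.adjoint T) (2 * (1 - α)) ∧
      ∀ β : ℝ, 0 < β →
        U.comp (absPow T β) = (absPow (ContinuousLinearMap.adjoint T) β).comp U := by
  obtain ⟨hα₀, hα₁⟩ := hα
  obtain ⟨U, hU⟩ := exists_isPolarFactor T hα₀ hα₁.le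
  exact ⟨U, hU.comp_absPow_self.symm, (hU.adjoint_comp_absPow hα₀).symm,
    hU.adjoint_comp_self hα₀ hα₁, hU.comp_adjoint_self hα₀ hα₁,
    fun _ hβ => hU.comp_absPow hα₀ hβ⟩
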